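/- arXiv:1510.00669 — 8 statements merged into one kernel-verified Lean document; each statement's English description precedes it below -/
import Mathlib

section
/- Let E be a category with pullbacks in which, for every map p in R (defined below), the pullback functor p* between slice categories has a right adjoint p_* (pushforward). Let I be a class of maps in E, let R be the class of maps with the right lifting property with respect to I, and let L be the class of maps with the left lifting property with respect to R. Then the following are equivalent: (i) the pullback of a map in L along a map in R is again in L; (ii) for every p : X → Y in R, the pushforward p_* sends objects of the slice over X whose underlying map lies in R to objects whose underlying map lies in R; (iii) the pullback of a map in I along a map in R is in L. -/
/-!
Statement 0 (Proposition `thm:frobenius-equivalence`): for a wfs free on a class `I`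
(`R = rlp I`, `L = llp R`), assuming pushforwards along `R`-maps exist, the following
are equivalent: (i) the Frobenius property, (ii) pushforward along `R`-maps preserves
`R`-maps, (iii) the pullback of an `I`-map along an `R`-map is an `L`-map.
-/

open CategoryTheory Category Limits

universe v u

namespace GS

variable {E : Type u} [Category.{v} E]

/-- The class of maps with the right lifting property with respect to all maps in `J`. -/
def rlp (J : MorphismProperty E) : MorphismProperty E :=
  fun _ _ p => ∀ ⦃A B : E⦄ (i : A ⟶ B), J i → HasLiftingProperty i p

/-- The class of maps with the left lifting property with respect to all maps in `J`. -/
def llp (J : MorphismProperty E) : MorphismProperty E :=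
  fun _ _ i => ∀ ⦃X Y : E⦄ (p : X ⟶ Y), J p → HasLiftingProperty i p

/-!
Transposing across `p^* ⊣ p_*` shows that `p^* f` lifts against `q` in `E/X` iff `f` lifts against
`p_* q` in `E/Y`, where lifting against an object of a slice means lifting against its map to the
terminal object. A map `i` lifts against `q.hom` in `E` iff it lifts against `q` in the slice for
every choice of structure map on its codomain. So `p_* q` is in `rlp I` as soon as all the `p^* i`
lift against `q`; these are pullbacks of maps of `I` along base changes of `p`, which gives
(iii) → (ii). For (ii) → (i), the pullback of `i : B ⟶ Y` along `p` is the image under `p^*` of `i`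
viewed as the map to the terminal object of `E/Y`. As `R` is stable under base change, this pullback
is in `llp R` as soon as it lifts, in `E/X`, against the objects of `E/X` whose underlying map is
in `R`.
-/

theorem rlp_eq (J : MorphismProperty E) : rlp J = J.rlp := rfl

theorem llp_eq (J : MorphismProperty E) : llp J = J.llp := rfl

section LiftingAgainstObjects

theorem hasLiftingProperty_map_from_iff {C : Type*} [Category* C] {D : Type*} [Category* D]
    {F : C ⥤ D} {G : D ⥤ C} (adj : F ⊣ G) {a b : C} (f : a ⟶ b) (q : D)
    {s : C} (hs : IsTerminal s) {t : D} (ht : IsTerminal t) :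
    HasLiftingProperty (F.map f) (ht.from q) ↔ HasLiftingProperty f (hs.from (G.obj q)) := by
  have : PreservesLimitsOfSize.{0, 0} G := adj.rightAdjoint_preservesLimits
  let e : G.obj t ≅ s := (ht.isTerminalObj G).uniqueUpToIso hs
  rw [adj.hasLiftingProperty_iff]
  exact HasLiftingProperty.iff_of_arrow_iso_right f
    (Arrow.isoMk (Iso.refl _) e (hs.hom_ext _ _))

theorem hasLiftingProperty_from_of_left {Y : E} {a b : Over Y} (f : a ⟶ b) (q : Over Y)
    (h : HasLiftingProperty f.left q.hom) :
    HasLiftingProperty f (Over.mkIdTerminal.from q) := by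
  have : HasLiftingProperty f.left (Over.mkIdTerminal.from q).left := by
    rwa [Over.mkIdTerminal_from_left]
  exact HasLiftingProperty.over f _

theorem hasLiftingProperty_hom_iff_forall_over {A B Y : E} (i : A ⟶ B) (q : Over Y) :
    HasLiftingProperty i q.hom ↔ ∀ b : B ⟶ Y,
      HasLiftingProperty (Over.homMk i : Over.mk (i ≫ b) ⟶ Over.mk b)
        (Over.mkIdTerminal.from q) := by
  refine ⟨fun h b => hasLiftingProperty_from_of_left _ q h, fun h => ⟨fun {u b} sq => ?_⟩⟩
  have := h b
  have sqOver : CommSq (Over.homMk u sq.w : Over.mk (i ≫ b) ⟶ q)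
      (Over.homMk i : Over.mk (i ≫ b) ⟶ Over.mk b) (Over.mkIdTerminal.from q)
      (Over.mkIdTerminal.from _) := ⟨Over.mkIdTerminal.hom_ext _ _⟩
  exact ⟨⟨sqOver.lift.left, congrArg Over.Hom.left sqOver.fac_left, Over.w sqOver.lift⟩⟩

theorem llp_iff_forall_over (R : MorphismProperty E) [R.HasPullbacks]
    [R.IsStableUnderBaseChange] {A X : E} (g : A ⟶ X) :
    R.llp g ↔ ∀ q : Over X, R q.hom →
      HasLiftingProperty (Over.mkIdTerminal.from (Over.mk g)) (Over.mkIdTerminal.from q) := by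
  refine ⟨fun hg q hq => hasLiftingProperty_from_of_left _ q ?_,
    fun h U V r hr => ⟨fun {f v} sq => ?_⟩⟩
  · simpa using hg q.hom hq
  · have : HasPullback r v := R.hasPullback v hr
    let q : Over X := Over.mk (pullback.snd r v)
    have := h q (R.pullback_snd r v hr)
    let u : Over.mk g ⟶ q := Over.homMk (pullback.lift f g sq.w) (pullback.lift_snd _ _ _)
    have sqOver : CommSq u (Over.mkIdTerminal.from (Over.mk g)) (Over.mkIdTerminal.from q) (𝟙 _) :=
      ⟨Over.mkIdTerminal.hom_ext _ _⟩
    let l : X ⟶ pullback r v := sqOver.lift.left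
    have fac_left : g ≫ l = pullback.lift f g sq.w := by
      have := congrArg Over.Hom.left sqOver.fac_left
      rwa [Over.comp_left, Over.mkIdTerminal_from_left] at this
    have fac_right : l ≫ pullback.snd r v = 𝟙 X := Over.w sqOver.lift
    refine ⟨⟨l ≫ pullback.fst r v, ?_, ?_⟩⟩
    · rw [reassoc_of% fac_left, pullback.lift_fst]
    · rw [assoc, pullback.condition, reassoc_of% fac_right]

end LiftingAgainstObjects

section PullbackFunctor

variable {X Y : E} (p : X ⟶ Y) [HasPullbacksAlong p]

theorem isPullback_over_pullback_map_left {a b : Over Y} (f : a ⟶ b) :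
    IsPullback (pullback.fst a.hom p) ((Over.pullback p).map f).left f.left
      (pullback.fst b.hom p) := by
  refine IsPullback.of_bot ?_ (pullback.lift_fst _ _ _).symm (IsPullback.of_hasPullback b.hom p)
  rw [Over.w f, show ((Over.pullback p).map f).left ≫ pullback.snd b.hom p = _ from
    pullback.lift_snd _ _ _]
  exact IsPullback.of_hasPullback a.hom p

/-- For a pullback square with sides `i` and `g`, this identifies `p^*` of `i`, viewed as the map to
the terminal object of `Over Y`, with `g`, viewed as the map to the terminal object of `Over X`. -/
noncomputable def overPullbackMapFromIso {A B : E} {t : A ⟶ B} {g : A ⟶ X} {i : B ⟶ Y}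
    (sq : IsPullback t g i p) :
    Arrow.mk ((Over.pullback p).map (Over.mkIdTerminal.from (Over.mk i))) ≅
      Arrow.mk (Over.mkIdTerminal.from (Over.mk g)) :=
  Arrow.isoMk (Over.isoMk sq.isoPullback.symm)
    ((Over.mkIdTerminal.isTerminalObj (Over.pullback p)).uniqueUpToIso Over.mkIdTerminal)
    (Over.mkIdTerminal.hom_ext _ _)

end PullbackFunctor

/-- Pullbacks of maps in `K` along maps in `R` lie in `L`. The Frobenius property of a weak
factorization system `(L, R)` is `PullbackMapsTo R L L`. -/
def PullbackMapsTo (R K L : MorphismProperty E) : Prop :=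
  ∀ ⦃A B X Y : E⦄ (t : A ⟶ B) (g : A ⟶ X) (i : B ⟶ Y) (p : X ⟶ Y),
    IsPullback t g i p → K i → R p → L g

/-- Pushforward along maps in `R` preserves maps in `R`. Here a pushforward along `p` is any right
adjoint of `Over.pullback p`. -/
def PushforwardPreserves (R : MorphismProperty E) : Prop :=
  ∀ ⦃X Y : E⦄ (p : X ⟶ Y) [HasPullbacksAlong p], R p → ∀ P : Over X ⥤ Over Y,
    Nonempty (Over.pullback p ⊣ P) → ∀ q : Over X, R q.hom → R (P.obj q).hom

theorem rlp_pushforward_hom {I R : MorphismProperty E} [R.IsStableUnderBaseChange]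
    (hI : PullbackMapsTo R I R.llp) {X Y : E} {p : X ⟶ Y} [HasPullbacksAlong p] (hp : R p)
    {P : Over X ⥤ Over Y} (adj : Over.pullback p ⊣ P) {q : Over X} (hq : R q.hom) :
    I.rlp (P.obj q).hom := by
  intro A B i hi
  rw [hasLiftingProperty_hom_iff_forall_over]
  intro b
  let f : Over.mk (i ≫ b) ⟶ Over.mk b := Over.homMk i
  rw [← hasLiftingProperty_map_from_iff adj f q Over.mkIdTerminal Over.mkIdTerminal]
  have hf : R.llp ((Over.pullback p).map f).left :=
    hI _ _ _ _ (isPullback_over_pullback_map_left p f) hi (R.pullback_fst b p hp)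
  exact hasLiftingProperty_from_of_left _ q (hf q.hom hq)

theorem llp_of_isPullback_of_pushforward {R : MorphismProperty E} [R.HasPullbacks]
    [R.IsStableUnderBaseChange] {A B X Y : E} {t : A ⟶ B} {g : A ⟶ X} {i : B ⟶ Y} {p : X ⟶ Y}
    [HasPullbacksAlong p] (sq : IsPullback t g i p) (hi : R.llp i) {P : Over X ⥤ Over Y}
    (adj : Over.pullback p ⊣ P) (hP : ∀ q : Over X, R q.hom → R (P.obj q).hom) : R.llp g := by
  rw [llp_iff_forall_over] at hi ⊢
  intro q hq
  rw [← HasLiftingProperty.iff_of_arrow_iso_left (overPullbackMapFromIso p sq),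
    hasLiftingProperty_map_from_iff adj _ _ Over.mkIdTerminal Over.mkIdTerminal]
  exact hi _ (hP q hq)

theorem frobenius_equivalence_general (I : MorphismProperty E) [I.rlp.HasPullbacks]
    (hadj : ∀ ⦃X Y : E⦄ (p : X ⟶ Y) [HasPullbacksAlong p], I.rlp p →
      (Over.pullback p).IsLeftAdjoint) :
    List.TFAE [PullbackMapsTo I.rlp I.rlp.llp I.rlp.llp, PushforwardPreserves I.rlp,
      PullbackMapsTo I.rlp I I.rlp.llp] := by
  tfae_have 1 → 3 := fun h _ _ _ _ t g i p sq hi hp => h t g i p sq (I.le_llp_rlp i hi) hp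
  tfae_have 3 → 2 := fun h _ _ p _ hp P ⟨adj⟩ q hq => rlp_pushforward_hom h hp adj hq
  tfae_have 2 → 1 := by
    intro h A B X Y t g i p sq hi hp
    have : HasPullbacksAlong p := fun b =>
      have := I.rlp.hasPullback b hp
      hasPullback_symmetry p b
    have := hadj p hp
    have adj := Adjunction.ofIsLeftAdjoint (Over.pullback p)
    exact llp_of_isPullback_of_pushforward sq hi adj (h p hp _ ⟨adj⟩)
  tfae_finish

theorem frobenius_equivalence [HasPullbacks E] (I : MorphismProperty E)
    (R : MorphismProperty E) (hR : R = rlp I)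
    (L : MorphismProperty E) (hL : L = llp R)
    (hadj : ∀ {X Y : E} (p : X ⟶ Y), R p →
      ∃ P : Over X ⥤ Over Y, Nonempty (Over.pullback p ⊣ P)) :
    -- (i) ↔ (ii)
    ((∀ ⦃A B X Y : E⦄ (t : A ⟶ B) (g : A ⟶ X) (i : B ⟶ Y) (p : X ⟶ Y),
        IsPullback t g i p → L i → R p → L g) ↔
      (∀ ⦃X Y : E⦄ (p : X ⟶ Y), R p → ∀ (P : Over X ⥤ Over Y),
        Nonempty (Over.pullback p ⊣ P) → ∀ q : Over X, R q.hom → R (P.obj q).hom))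
    ∧
    -- (i) ↔ (iii)
    ((∀ ⦃A B X Y : E⦄ (t : A ⟶ B) (g : A ⟶ X) (i : B ⟶ Y) (p : X ⟶ Y),
        IsPullback t g i p → L i → R p → L g) ↔
      (∀ ⦃A B X Y : E⦄ (t : A ⟶ B) (g : A ⟶ X) (i : B ⟶ Y) (p : X ⟶ Y),
        IsPullback t g i p → I i → R p → L g)) := by
  subst hR hL
  simp only [rlp_eq, llp_eq] at hadj ⊢
  have tfae := frobenius_equivalence_general I fun X Y p _ hp =>
    let ⟨P, hP⟩ := hadj p hp
    ⟨P, hP⟩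
  have frobenius_iff_pushforward : _ ↔ PushforwardPreserves I.rlp := tfae.out 0 1
  exact ⟨frobenius_iff_pushforward.trans ⟨fun h _ _ p => h p, fun h _ _ p _ => h p⟩,
    tfae.out 0 2⟩

end GS
end

section
/- Let E be a category with pushouts and pullbacks equipped with a functorial cylinder I⊗(−) that has a right adjoint exp(I,−). Let I be a class of maps, set Cof = llp(rlp(I)), I_⊗ = { δᵏ ⊗̂ i : i ∈ I, k ∈ {0,1} }, Fib = rlp(I_⊗), and TrivCof = llp(Fib). Then for every map f : X → Y in Cof and every k ∈ {0,1}, the Leibniz product δᵏ ⊗̂ f lies in TrivCof. -/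
/-!
Statement 2 (Corollary `thm:kcyl-of-cof-is-trivcof-non-alg`): if `f ∈ Cof = llp(rlp I)`
then `δᵏ ⊗̂ f ∈ TrivCof = llp(Fib)`, where `Fib = rlp(I_⊗)`.
-/

open CategoryTheory Category Limits

universe v u

namespace GS

variable {E : Type u} [Category.{v} E]

structure Cylinder (E : Type u) [Category.{v} E] where
  I : E ⥤ E
  δ : Fin 2 → (𝟭 E ⟶ I)

variable (Q : Cylinder E)

noncomputable def Cylinder.leibniz [HasPushouts E] (k : Fin 2) {A B : E} (i : A ⟶ B) :
    pushout ((Q.δ k).app A) i ⟶ Q.I.obj B :=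
  pushout.desc (Q.I.map i) ((Q.δ k).app B) (by simpa using ((Q.δ k).naturality i).symm)

/-- The class of fibrations: maps with the right lifting property with respect to
the generating trivial cofibrations `I_⊗ = {δᵏ ⊗̂ i | i ∈ I, k ∈ {0,1}}`. -/
def fib [HasPushouts E] (I : MorphismProperty E) : MorphismProperty E :=
  fun _ _ p => ∀ ⦃A B : E⦄ (i : A ⟶ B), I i → ∀ k : Fin 2,
    HasLiftingProperty (Q.leibniz k i) p

/-!
A bifunctor `F` whose partial functors `F.obj X` are left adjoints has a parametrized right adjoint,
and transposition turns lifting problems of a Leibniz product `j ⊗̂ i` against `p` into lifting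
problems of `i` against the Leibniz pullback of `p` by `j`. For fixed `j` and `p`, call the latter
map `q`: if every `j ⊗̂ i` with `i ∈ I` lifts against `p`, then `q ∈ rlp I`, so every map
`f ∈ llp (rlp I)` lifts against `q`, that is, `j ⊗̂ f` lifts against `p`.

The endpoint inclusions of a cylinder are morphisms of the category of left adjoint endofunctors, to
which this applies with `F` the evaluation bifunctor.
-/

section LeibnizProducts

open Functor

universe v₁ v₂ v₃ u₁ u₂ u₃

variable {C₁ : Type u₁} {C₂ : Type u₂} {C₃ : Type u₃}
  [Category.{v₁} C₁] [Category.{v₂} C₂] [Category.{v₃} C₃] (F : C₁ ⥤ C₂ ⥤ C₃)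

/-- The bifunctor, contravariant in `C₁`, of right adjoints of the functors `F.obj X`. A morphism
of `C₁` acts by the conjugate of its action on the left adjoints. -/
noncomputable def rightAdjointBifunctor [∀ X, (F.obj X).IsLeftAdjoint] : C₁ᵒᵖ ⥤ C₃ ⥤ C₂ where
  obj X := (F.obj X.unop).rightAdjoint
  map g := conjugateEquiv (.ofIsLeftAdjoint _) (.ofIsLeftAdjoint _) (F.map g.unop)

/-- The parametrized adjunction assembled from adjunctions of each `F.obj X` with its right
adjoint. -/
noncomputable def parametrizedAdjunctionOfIsLeftAdjoint [∀ X, (F.obj X).IsLeftAdjoint] :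
    F ⊣₂ rightAdjointBifunctor F where
  adj X := .ofIsLeftAdjoint (F.obj X)
  unit_whiskerRight_map g := by
    ext A
    exact (unit_conjugateEquiv _ _ (F.map g) A).symm

/-- The class `{j ⊗̂ i | j ∈ J, i ∈ I}` of Leibniz products with respect to `F`. -/
inductive leibnizProducts [HasPushouts C₃] (J : MorphismProperty C₁) (I : MorphismProperty C₂) :
    MorphismProperty C₃
  | mk {X Y : C₁} {A B : C₂} {j : X ⟶ Y} {i : A ⟶ B} (hj : J j) (hi : I i) :
      leibnizProducts J I (PushoutObjObj.ofHasPushout F j i).ι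

theorem leibniz_of_cof_mem_trivCof_general [HasPullbacks C₂] [HasPushouts C₃]
    [∀ X, (F.obj X).IsLeftAdjoint] (J : MorphismProperty C₁) (I : MorphismProperty C₂)
    {X Y : C₁} {j : X ⟶ Y} (hj : J j) {A B : C₂} {f : A ⟶ B} (hf : llp (rlp I) f) :
    llp (rlp (leibnizProducts F J I)) (PushoutObjObj.ofHasPushout F j f).ι := by
  intro U V p hp
  have lifts_iff {A B : C₂} (i : A ⟶ B) :
      HasLiftingProperty (PushoutObjObj.ofHasPushout F j i).ι p ↔
        HasLiftingProperty i (PullbackObjObj.ofHasPullback (rightAdjointBifunctor F) j p).π :=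
    (parametrizedAdjunctionOfIsLeftAdjoint F).hasLiftingProperty_iff _ _
  rw [lifts_iff]
  refine hf _ fun _ _ i hi ↦ ?_
  rw [← lifts_iff]
  exact hp _ (.mk hj hi)

end LeibnizProducts

/-- The category of left adjoint endofunctors of `E`. Its inclusion into `E ⥤ E` is the evaluation
bifunctor, all of whose partial functors are left adjoints. -/
abbrev LeftAdjointEndofunctor (E : Type u) [Category.{v} E] :=
  ObjectProperty.FullSubcategory fun F : E ⥤ E ↦ F.IsLeftAdjoint

instance (F : LeftAdjointEndofunctor E) : ((ObjectProperty.ι _).obj F).IsLeftAdjoint := F.property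

/-- The endpoint inclusion `δᵏ` as a morphism of left adjoint endofunctors. Its Leibniz product with
a map `i` for the evaluation bifunctor is definitionally `Q.leibniz k i`. -/
def Cylinder.endpoint [Q.I.IsLeftAdjoint] (k : Fin 2) :
    (⟨𝟭 E, inferInstance⟩ : LeftAdjointEndofunctor E) ⟶ ⟨Q.I, inferInstance⟩ :=
  ObjectProperty.homMk (Q.δ k)

theorem Cylinder.fib_eq_rlp_leibnizProducts [HasPushouts E] [Q.I.IsLeftAdjoint]
    (I : MorphismProperty E) :
    fib Q I = rlp (leibnizProducts (ObjectProperty.ι _) (.ofHoms Q.endpoint) I) := by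
  ext U V p
  constructor
  · rintro hp _ _ _ ⟨⟨k⟩, hi⟩
    exact hp _ hi k
  · intro hp _ _ i hi k
    exact hp _ (leibnizProducts.mk (MorphismProperty.ofHoms.mk k) hi)

theorem leibniz_of_cof_mem_trivCof [HasPushouts E] [HasPullbacks E]
    (Exp : E ⥤ E) (adj : Q.I ⊣ Exp) (I : MorphismProperty E)
    {X Y : E} (f : X ⟶ Y) (hf : llp (rlp I) f) (k : Fin 2) :
    llp (fib Q I) (Q.leibniz k f) := by
  have : Q.I.IsLeftAdjoint := adj.isLeftAdjoint
  rw [Q.fib_eq_rlp_leibnizProducts]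
  exact leibniz_of_cof_mem_trivCof_general _ _ I (MorphismProperty.ofHoms.mk k) hf

end GS
end

section
/- Let E be a category with pushouts equipped with a functorial cylinder I⊗(−) with endpoint inclusions δ⁰, δ¹. Fix k ∈ {0,1}. A map f : X → Y is a strong k-oriented homotopy equivalence if and only if the morphism θᵏ ⊗̂ f : f → δᵏ ⊗̂ f in the arrow category exhibits f as a retract of δᵏ ⊗̂ f; that is, if and only if there exist maps r : (I⊗X) +_X Y → X and s : I⊗Y → Y forming a morphism (r,s) : δᵏ ⊗̂ f → f in the arrow category such that (r,s) ∘ (θᵏ ⊗̂ f) is the identity on f. -/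
/-!
Statement 3 (Lemma `strong-h-equiv-as-section-non-alg`): a map `f : X ⟶ Y` is a strong
`k`-oriented homotopy equivalence if and only if `θᵏ ⊗̂ f : f ⟶ δᵏ ⊗̂ f` exhibits `f`
as a retract of `δᵏ ⊗̂ f` in the arrow category.
-/

open CategoryTheory Category Limits

universe v u

namespace GS

variable {E : Type u} [Category.{v} E]

variable (Q : Cylinder E)

def IsStrongHEquivWith (k : Fin 2) {X Y : E} (f : X ⟶ Y)
    (g : Y ⟶ X) (φ : Q.I.obj X ⟶ X) (ψ : Q.I.obj Y ⟶ Y) : Prop :=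
  (Q.δ k).app X ≫ φ = f ≫ g ∧ (Q.δ (1 - k)).app X ≫ φ = 𝟙 X ∧
  (Q.δ k).app Y ≫ ψ = g ≫ f ∧ (Q.δ (1 - k)).app Y ≫ ψ = 𝟙 Y ∧
  φ ≫ f = Q.I.map f ≫ ψ

def IsStrongHEquiv (k : Fin 2) {X Y : E} (f : X ⟶ Y) : Prop :=
  ∃ g φ ψ, IsStrongHEquivWith Q k f g φ ψ

section HasPushouts

variable [HasPushouts E] (k : Fin 2) {A B : E} (i : A ⟶ B)

theorem Cylinder.inl_leibniz :
    pushout.inl ((Q.δ k).app A) i ≫ Q.leibniz k i = Q.I.map i :=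
  pushout.inl_desc _ _ _

theorem Cylinder.inr_leibniz :
    pushout.inr ((Q.δ k).app A) i ≫ Q.leibniz k i = (Q.δ k).app B :=
  pushout.inr_desc _ _ _

end HasPushouts

section IsPushout

theorem hom_ext_iff_of_isPushout {A B C P Z : E} {a : A ⟶ B} {b : A ⟶ C} {inl : B ⟶ P}
    {inr : C ⟶ P} (hP : IsPushout a b inl inr) {u v : P ⟶ Z} :
    u = v ↔ inl ≫ u = inl ≫ v ∧ inr ≫ u = inr ≫ v :=
  ⟨fun h => ⟨h ▸ rfl, h ▸ rfl⟩, fun ⟨hl, hr⟩ => hP.hom_ext hl hr⟩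

variable {Q} {k : Fin 2} {X Y P : E} {f : X ⟶ Y} {inl : Q.I.obj X ⟶ P} {inr : Y ⟶ P}
  {l : P ⟶ Q.I.obj Y}

/-- A map `r` out of the pushout packages the homotopy inverse `inr ≫ r` and the homotopy
`inl ≫ r`, whose value `f ≫ inr ≫ r` at the endpoint `k` is forced by the pushout square. -/
theorem isStrongHEquivWith_iff_of_isPushout (hP : IsPushout ((Q.δ k).app X) f inl inr)
    (hinl : inl ≫ l = Q.I.map f) (hinr : inr ≫ l = (Q.δ k).app Y)
    {r : P ⟶ X} {s : Q.I.obj Y ⟶ Y} :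
    IsStrongHEquivWith Q k f (inr ≫ r) (inl ≫ r) s ↔
      r ≫ f = l ≫ s ∧ ((Q.δ (1 - k)).app X ≫ inl) ≫ r = 𝟙 X ∧
        (Q.δ (1 - k)).app Y ≫ s = 𝟙 Y := by
  have hendpoint : (Q.δ k).app X ≫ inl ≫ r = f ≫ inr ≫ r := hP.w_assoc r
  have hmorphism : r ≫ f = l ≫ s ↔
      (inl ≫ r) ≫ f = Q.I.map f ≫ s ∧ (Q.δ k).app Y ≫ s = (inr ≫ r) ≫ f := by
    rw [hom_ext_iff_of_isPushout hP, reassoc_of% hinl, reassoc_of% hinr, assoc, assoc,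
      eq_comm (a := inr ≫ r ≫ f)]
  simp only [hmorphism, IsStrongHEquivWith, assoc]
  tauto

theorem strongHEquiv_iff_retract_general (hP : IsPushout ((Q.δ k).app X) f inl inr)
    (hinl : inl ≫ l = Q.I.map f) (hinr : inr ≫ l = (Q.δ k).app Y) :
    IsStrongHEquiv Q k f ↔
      ∃ (r : P ⟶ X) (s : Q.I.obj Y ⟶ Y),
        r ≫ f = l ≫ s ∧ ((Q.δ (1 - k)).app X ≫ inl) ≫ r = 𝟙 X ∧
          (Q.δ (1 - k)).app Y ≫ s = 𝟙 Y := by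
  simp only [← isStrongHEquivWith_iff_of_isPushout hP hinl hinr]
  constructor
  · rintro ⟨g, φ, ψ, h⟩
    refine ⟨hP.desc φ g h.1, ψ, ?_⟩
    rwa [hP.inl_desc, hP.inr_desc]
  · rintro ⟨r, s, h⟩
    exact ⟨inr ≫ r, inl ≫ r, s, h⟩

end IsPushout

theorem strongHEquiv_iff_retract [HasPushouts E] (k : Fin 2) {X Y : E} (f : X ⟶ Y) :
    IsStrongHEquiv Q k f ↔
      ∃ (r : pushout ((Q.δ k).app X) f ⟶ X) (s : Q.I.obj Y ⟶ Y),
        -- `(r, s)` is a morphism `δᵏ ⊗̂ f ⟶ f` in the arrow category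
        r ≫ f = Q.leibniz k f ≫ s ∧
        -- the composite with `θᵏ ⊗̂ f : f ⟶ δᵏ ⊗̂ f` is the identity on `f`
        ((Q.δ (1 - k)).app X ≫ pushout.inl ((Q.δ k).app X) f) ≫ r = 𝟙 X ∧
        (Q.δ (1 - k)).app Y ≫ s = 𝟙 Y :=
  strongHEquiv_iff_retract_general (IsPushout.of_hasPushout _ _)
    (Cylinder.inl_leibniz Q k f) (Cylinder.inr_leibniz Q k f)

end GS
end

section
/- Let E be a category with pushouts equipped with a functorial cylinder I⊗(−) that preserves pushouts (for instance, because it has a right adjoint) and that has contractions ε and connections c⁰, c¹. Then for every map h : X → Y and every k ∈ {0,1}, the Leibniz product δᵏ ⊗̂ h : (I⊗X) +_X Y → I⊗Y is a strong k-oriented homotopy equivalence. -/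
/-!
Statement 4 (Lemma `thm:kcylf-is-she`): for every map `h : X ⟶ Y`, the Leibniz product
`δᵏ ⊗̂ h` is a strong `k`-oriented homotopy equivalence (assuming the functorial
cylinder preserves pushouts and has contractions and connections).
-/

open CategoryTheory Category Limits

universe v u

namespace GS

variable {E : Type u} [Category.{v} E]

variable (Q : Cylinder E)

/-- Contractions and connections on a functorial cylinder. -/
structure Connections (Q : Cylinder E) where
  ε : Q.I ⟶ 𝟭 E
  contr : ∀ (k : Fin 2) (X : E), (Q.δ k).app X ≫ ε.app X = 𝟙 X
  c : Fin 2 → (Q.I ⋙ Q.I ⟶ Q.I)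
  conn_δ_cyl : ∀ (k : Fin 2) (X : E),
    (Q.δ k).app (Q.I.obj X) ≫ (c k).app X = ε.app X ≫ (Q.δ k).app X
  conn_cyl_δ : ∀ (k : Fin 2) (X : E),
    Q.I.map ((Q.δ k).app X) ≫ (c k).app X = ε.app X ≫ (Q.δ k).app X
  conn_δ'_cyl : ∀ (k : Fin 2) (X : E),
    (Q.δ (1 - k)).app (Q.I.obj X) ≫ (c k).app X = 𝟙 (Q.I.obj X)
  conn_cyl_δ' : ∀ (k : Fin 2) (X : E),
    Q.I.map ((Q.δ (1 - k)).app X) ≫ (c k).app X = 𝟙 (Q.I.obj X)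

/-!
In the category of arrows, `δᵏ ⊗̂ h` is the pushout of `δᵏ ⊗ Y` and the identity of `I ⊗ X` along
`δᵏ ⊗ X`. The maps `δᵏ ⊗ Y` and `𝟙 (I ⊗ X)` are strong homotopy equivalences, with inverses `ε` and
`ε ≫ δᵏ`, and homotopies `(ε, cᵏ)` and `(cᵏ, cᵏ)`. These data agree on `δᵏ ⊗ X`, so they glue to
the data for `δᵏ ⊗̂ h` as soon as the cylinder preserves the pushouts involved.
-/

section Gluing

variable {Q}

lemma comp_δ_app_comp (k : Fin 2) {X X' : E} {i : X ⟶ X'} {φ : Q.I.obj X ⟶ X}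
    {φ' : Q.I.obj X' ⟶ X'} (hφ : Q.I.map i ≫ φ' = φ ≫ i) :
    i ≫ (Q.δ k).app X' ≫ φ' = ((Q.δ k).app X ≫ φ) ≫ i := by
  have hδ : i ≫ (Q.δ k).app X' = (Q.δ k).app X ≫ Q.I.map i := (Q.δ k).naturality i
  rw [reassoc_of% hδ, hφ, assoc]

lemma comp_δ_app_comp_of_eq_id {k : Fin 2} {X X' : E} {i : X ⟶ X'} {φ : Q.I.obj X ⟶ X}
    {φ' : Q.I.obj X' ⟶ X'} (hφ : Q.I.map i ≫ φ' = φ ≫ i)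
    (hφ_id : (Q.δ k).app X ≫ φ = 𝟙 X) :
    i ≫ (Q.δ k).app X' ≫ φ' = i ≫ 𝟙 X' := by
  rw [comp_δ_app_comp k hφ, hφ_id]
  exact (id_comp i).trans (comp_id i).symm

/-- The pair `(i, j)` is a morphism of arrows `f ⟶ f'` that strictly respects the candidate
inverses and homotopies exhibiting `f` and `f'` as strong homotopy equivalences. The laws of
`IsStrongHEquivWith` are not part of the notion: gluing transports them along such morphisms. -/
structure IsStrongHEquivHom {X Y X' Y' : E} (f : X ⟶ Y) (g : Y ⟶ X) (φ : Q.I.obj X ⟶ X)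
    (ψ : Q.I.obj Y ⟶ Y) (f' : X' ⟶ Y') (g' : Y' ⟶ X') (φ' : Q.I.obj X' ⟶ X')
    (ψ' : Q.I.obj Y' ⟶ Y') (i : X ⟶ X') (j : Y ⟶ Y') : Prop where
  comm : i ≫ f' = f ≫ j
  comm_inv : j ≫ g' = g ≫ i
  comm_dom : Q.I.map i ≫ φ' = φ ≫ i
  comm_cod : Q.I.map j ≫ ψ' = ψ ≫ j

namespace IsStrongHEquivHom

variable {k : Fin 2} {X Y X' Y' : E} {f : X ⟶ Y} {g : Y ⟶ X} {φ : Q.I.obj X ⟶ X}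
  {ψ : Q.I.obj Y ⟶ Y} {f' : X' ⟶ Y'} {g' : Y' ⟶ X'} {φ' : Q.I.obj X' ⟶ X'}
  {ψ' : Q.I.obj Y' ⟶ Y'} {i : X ⟶ X'} {j : Y ⟶ Y'}

lemma comp_δ_app_dom (m : IsStrongHEquivHom f g φ ψ f' g' φ' ψ' i j)
    (hφ : (Q.δ k).app X ≫ φ = f ≫ g) :
    i ≫ (Q.δ k).app X' ≫ φ' = i ≫ f' ≫ g' := by
  rw [comp_δ_app_comp k m.comm_dom, hφ, assoc, ← m.comm_inv, reassoc_of% m.comm]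

lemma comp_δ_app_cod (m : IsStrongHEquivHom f g φ ψ f' g' φ' ψ' i j)
    (hψ : (Q.δ k).app Y ≫ ψ = g ≫ f) :
    j ≫ (Q.δ k).app Y' ≫ ψ' = j ≫ g' ≫ f' := by
  rw [comp_δ_app_comp k m.comm_cod, hψ, assoc, ← m.comm, reassoc_of% m.comm_inv]

lemma map_comp_strength (m : IsStrongHEquivHom f g φ ψ f' g' φ' ψ' i j)
    (hφψ : φ ≫ f = Q.I.map f ≫ ψ) :
    Q.I.map i ≫ φ' ≫ f' = Q.I.map i ≫ Q.I.map f' ≫ ψ' := by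
  rw [reassoc_of% m.comm_dom, m.comm, reassoc_of% hφψ, ← m.comm_cod, ← Q.I.map_comp_assoc,
    ← m.comm, Q.I.map_comp_assoc]

end IsStrongHEquivHom

variable {k : Fin 2} {X₀ X₁ X₂ X Y₀ Y₁ Y₂ Y : E}
  {a₁ : X₀ ⟶ X₁} {a₂ : X₀ ⟶ X₂} {i₁ : X₁ ⟶ X} {i₂ : X₂ ⟶ X}
  {b₁ : Y₀ ⟶ Y₁} {b₂ : Y₀ ⟶ Y₂} {j₁ : Y₁ ⟶ Y} {j₂ : Y₂ ⟶ Y}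
  {f₁ : X₁ ⟶ Y₁} {g₁ : Y₁ ⟶ X₁} {φ₁ : Q.I.obj X₁ ⟶ X₁} {ψ₁ : Q.I.obj Y₁ ⟶ Y₁}
  {f₂ : X₂ ⟶ Y₂} {g₂ : Y₂ ⟶ X₂} {φ₂ : Q.I.obj X₂ ⟶ X₂} {ψ₂ : Q.I.obj Y₂ ⟶ Y₂}
  {f : X ⟶ Y}

lemma IsStrongHEquivWith.of_isPushout {g : Y ⟶ X} {φ : Q.I.obj X ⟶ X} {ψ : Q.I.obj Y ⟶ Y}
    (hX : IsPushout a₁ a₂ i₁ i₂)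
    (hIX : IsPushout (Q.I.map a₁) (Q.I.map a₂) (Q.I.map i₁) (Q.I.map i₂))
    (hY : IsPushout b₁ b₂ j₁ j₂)
    (h₁ : IsStrongHEquivWith Q k f₁ g₁ φ₁ ψ₁) (h₂ : IsStrongHEquivWith Q k f₂ g₂ φ₂ ψ₂)
    (m₁ : IsStrongHEquivHom f₁ g₁ φ₁ ψ₁ f g φ ψ i₁ j₁)
    (m₂ : IsStrongHEquivHom f₂ g₂ φ₂ ψ₂ f g φ ψ i₂ j₂) :
    IsStrongHEquivWith Q k f g φ ψ := by
  obtain ⟨hφ₁, hφ_id₁, hψ₁, hψ_id₁, hφψ₁⟩ := h₁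
  obtain ⟨hφ₂, hφ_id₂, hψ₂, hψ_id₂, hφψ₂⟩ := h₂
  exact ⟨hX.hom_ext (m₁.comp_δ_app_dom hφ₁) (m₂.comp_δ_app_dom hφ₂),
    hX.hom_ext (comp_δ_app_comp_of_eq_id m₁.comm_dom hφ_id₁)
      (comp_δ_app_comp_of_eq_id m₂.comm_dom hφ_id₂),
    hY.hom_ext (m₁.comp_δ_app_cod hψ₁) (m₂.comp_δ_app_cod hψ₂),
    hY.hom_ext (comp_δ_app_comp_of_eq_id m₁.comm_cod hψ_id₁)
      (comp_δ_app_comp_of_eq_id m₂.comm_cod hψ_id₂),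
    hIX.hom_ext (m₁.map_comp_strength hφψ₁) (m₂.map_comp_strength hφψ₂)⟩

theorem IsStrongHEquiv.of_isPushout
    (hX : IsPushout a₁ a₂ i₁ i₂)
    (hIX : IsPushout (Q.I.map a₁) (Q.I.map a₂) (Q.I.map i₁) (Q.I.map i₂))
    (hY : IsPushout b₁ b₂ j₁ j₂)
    (hIY : IsPushout (Q.I.map b₁) (Q.I.map b₂) (Q.I.map j₁) (Q.I.map j₂))
    (h₁ : IsStrongHEquivWith Q k f₁ g₁ φ₁ ψ₁) (h₂ : IsStrongHEquivWith Q k f₂ g₂ φ₂ ψ₂)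
    (hf₁ : i₁ ≫ f = f₁ ≫ j₁) (hf₂ : i₂ ≫ f = f₂ ≫ j₂)
    (hg : b₁ ≫ g₁ ≫ i₁ = b₂ ≫ g₂ ≫ i₂)
    (hφ : Q.I.map a₁ ≫ φ₁ ≫ i₁ = Q.I.map a₂ ≫ φ₂ ≫ i₂)
    (hψ : Q.I.map b₁ ≫ ψ₁ ≫ j₁ = Q.I.map b₂ ≫ ψ₂ ≫ j₂) :
    IsStrongHEquiv Q k f := by
  obtain ⟨g, hg₁, hg₂⟩ := hY.exists_desc _ _ hg
  obtain ⟨φ, hφ₁, hφ₂⟩ := hIX.exists_desc _ _ hφ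
  obtain ⟨ψ, hψ₁, hψ₂⟩ := hIY.exists_desc _ _ hψ
  exact ⟨g, φ, ψ, .of_isPushout hX hIX hY h₁ h₂ ⟨hf₁, hg₁, hφ₁, hψ₁⟩ ⟨hf₂, hg₂, hφ₂, hψ₂⟩⟩

end Gluing

namespace Connections

variable {Q} (conn : Connections Q)

lemma isStrongHEquivWith_δ (k : Fin 2) (X : E) :
    IsStrongHEquivWith Q k ((Q.δ k).app X) (conn.ε.app X) (conn.ε.app X) ((conn.c k).app X) :=
  ⟨rfl, conn.contr _ X, conn.conn_δ_cyl k X, conn.conn_δ'_cyl k X, (conn.conn_cyl_δ k X).symm⟩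

lemma isStrongHEquivWith_id (k : Fin 2) (X : E) :
    IsStrongHEquivWith Q k (𝟙 (Q.I.obj X)) (conn.ε.app X ≫ (Q.δ k).app X)
      ((conn.c k).app X) ((conn.c k).app X) := by
  have hδ := conn.conn_δ_cyl k X
  have hδ' := conn.conn_δ'_cyl k X
  refine ⟨?_, hδ', ?_, hδ', ?_⟩
  · rw [id_comp, hδ]
  · rw [comp_id, hδ]
  · rw [comp_id, CategoryTheory.Functor.map_id, id_comp]

end Connections

theorem leibniz_isStrongHEquiv_general (conn : Connections Q) {X Y P : E} {h : X ⟶ Y} {k : Fin 2}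
    {inl : Q.I.obj X ⟶ P} {inr : Y ⟶ P} (hP : IsPushout ((Q.δ k).app X) h inl inr)
    (hIP : IsPushout (Q.I.map ((Q.δ k).app X)) (Q.I.map h) (Q.I.map inl) (Q.I.map inr))
    {f : P ⟶ Q.I.obj Y} (hinl : inl ≫ f = Q.I.map h) (hinr : inr ≫ f = (Q.δ k).app Y) :
    IsStrongHEquiv Q k f := by
  have hIY : IsPushout (Q.I.map (𝟙 (Q.I.obj X))) (Q.I.map (Q.I.map h))
      (Q.I.map (Q.I.map h)) (Q.I.map (𝟙 (Q.I.obj Y))) := by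
    simpa only [CategoryTheory.Functor.map_id] using IsPushout.id_horiz (Q.I.map (Q.I.map h))
  have hε : (conn.ε.app X ≫ (Q.δ k).app X) ≫ inl = Q.I.map h ≫ conn.ε.app Y ≫ inr := by
    have hεh : Q.I.map h ≫ conn.ε.app Y = conn.ε.app X ≫ h := conn.ε.naturality h
    rw [reassoc_of% hεh, ← hP.w, assoc]
  have hc : (conn.c k).app X ≫ Q.I.map h = Q.I.map (Q.I.map h) ≫ (conn.c k).app Y :=
    ((conn.c k).naturality h).symm
  refine .of_isPushout hP hIP (.id_horiz (Q.I.map h)) hIY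
    (conn.isStrongHEquivWith_id k X) (conn.isStrongHEquivWith_δ k Y) ?_ ?_ ?_ ?_ ?_
  · rw [hinl, id_comp]
  · rw [hinr, comp_id]
  · rw [id_comp, hε]
  · rw [← hε, ← conn.conn_cyl_δ, assoc]
  · rw [CategoryTheory.Functor.map_id, id_comp, comp_id, hc]

theorem leibniz_isStrongHEquiv [HasPushouts E]
    [PreservesColimitsOfShape WalkingSpan Q.I] (conn : Connections Q)
    {X Y : E} (h : X ⟶ Y) (k : Fin 2) :
    IsStrongHEquiv Q k (Q.leibniz k h) :=
  have hP := IsPushout.of_hasPushout ((Q.δ k).app X) h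
  leibniz_isStrongHEquiv_general Q conn hP (hP.map Q.I) (pushout.inl_desc _ _ _)
    (pushout.inr_desc _ _ _)

end GS
end

section
/- Let E be a finitely complete and cocomplete category equipped with a functorial cylinder I⊗(−) having contractions, connections, and a right adjoint. Let I be a set of maps, Cof = llp(rlp(I)), and assume that Cof is closed under Leibniz product with the endpoint inclusions (i.e., i ∈ Cof implies δᵏ ⊗̂ i ∈ Cof for k ∈ {0,1}). Let I_⊗ = { δᵏ ⊗̂ i : i ∈ I, k ∈ {0,1} } and let S be the class of maps that are strong 0-oriented or strong 1-oriented homotopy equivalences. Then every map in I_⊗ lies in Cof ∩ S. -/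
/-!
Statement 6 (Lemma `thm:main-sheretract`(i)): every generating trivial cofibration
`δᵏ ⊗̂ i` (for `i ∈ I`, `k ∈ {0,1}`) is both a cofibration and a strong homotopy
equivalence, i.e. `I_⊗ ⊆ Cof ∩ S`.
-/

open CategoryTheory Category Limits

universe v u

namespace GS

variable {E : Type u} [Category.{v} E]

variable (Q : Cylinder E)

/-!
The endpoint inclusion `δᵏ` at `B` is a strong homotopy equivalence with homotopy inverse `ε`: the
connection `cᵏ` contracts `I ⊗ B` onto its `k`-th end. The Leibniz product `δᵏ ⊗̂ i` inherits this
structure: as `I ⊗ -` preserves the pushout `(I ⊗ A) +_A B`, the connection on `A` and the constant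
homotopy on `B` glue to a contraction of the pushout onto `B`, and the resulting homotopy inverse of
`δᵏ ⊗̂ i` is the projection `I ⊗ B ⟶ B` followed by the inclusion of `B`.
-/

theorem le_llp_rlp (J : MorphismProperty E) : J ≤ llp (rlp J) :=
  fun _ _ i hi _ _ _ hp => hp i hi

namespace Cylinder

theorem comp_δ (k : Fin 2) {X Y : E} (f : X ⟶ Y) :
    f ≫ (Q.δ k).app Y = (Q.δ k).app X ≫ Q.I.map f :=
  (Q.δ k).naturality f

variable [HasPushouts E] (k : Fin 2) {A B : E} (i : A ⟶ B)

theorem inl_comp_leibniz : pushout.inl ((Q.δ k).app A) i ≫ Q.leibniz k i = Q.I.map i :=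
  pushout.inl_desc _ _ _

theorem inr_comp_leibniz : pushout.inr ((Q.δ k).app A) i ≫ Q.leibniz k i = (Q.δ k).app B :=
  pushout.inr_desc _ _ _

theorem isPushout_map_pushout [PreservesColimit (span ((Q.δ k).app A) i) Q.I] :
    IsPushout (Q.I.map ((Q.δ k).app A)) (Q.I.map i)
      (Q.I.map (pushout.inl ((Q.δ k).app A) i)) (Q.I.map (pushout.inr ((Q.δ k).app A) i)) :=
  (IsPushout.of_hasPushout ((Q.δ k).app A) i).map Q.I

end Cylinder

variable {Q} in
theorem IsStrongHEquiv.zero_or_one {k : Fin 2} {X Y : E} {f : X ⟶ Y} (hf : IsStrongHEquiv Q k f) :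
    IsStrongHEquiv Q 0 f ∨ IsStrongHEquiv Q 1 f := by
  fin_cases k
  · exact .inl hf
  · exact .inr hf

namespace Connections

variable {Q} [HasPushouts E] (conn : Connections Q) (k : Fin 2) {A B : E} (i : A ⟶ B)

theorem map_comp_ε_comp_inr :
    Q.I.map i ≫ conn.ε.app B ≫ pushout.inr ((Q.δ k).app A) i =
      conn.ε.app A ≫ (Q.δ k).app A ≫ pushout.inl ((Q.δ k).app A) i := by
  have ε_naturality := conn.ε.naturality i
  dsimp only [Functor.id_obj, Functor.id_map] at ε_naturality
  rw [reassoc_of% ε_naturality, ← pushout.condition]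

variable [PreservesColimit (span ((Q.δ k).app A) i) Q.I]

/-- The homotopy contracting the domain `(I ⊗ A) +_A B` of `δᵏ ⊗̂ i` onto `B`: the connection `cᵏ`
on the summand `I ⊗ A`, glued to the constant homotopy on `B`. -/
noncomputable def leibnizContraction :
    Q.I.obj (pushout ((Q.δ k).app A) i) ⟶ pushout ((Q.δ k).app A) i :=
  (Q.isPushout_map_pushout k i).desc
    ((conn.c k).app A ≫ pushout.inl ((Q.δ k).app A) i)
    (conn.ε.app B ≫ pushout.inr ((Q.δ k).app A) i) (by
      have map_δ_comp_c := conn.conn_cyl_δ k A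
      dsimp only [Functor.id_obj, Functor.comp_obj] at map_δ_comp_c ⊢
      rw [reassoc_of% map_δ_comp_c, conn.map_comp_ε_comp_inr])

theorem map_inl_comp_leibnizContraction :
    Q.I.map (pushout.inl ((Q.δ k).app A) i) ≫ conn.leibnizContraction k i =
      (conn.c k).app A ≫ pushout.inl ((Q.δ k).app A) i :=
  IsPushout.inl_desc _ _ _ _

theorem map_inr_comp_leibnizContraction :
    Q.I.map (pushout.inr ((Q.δ k).app A) i) ≫ conn.leibnizContraction k i =
      conn.ε.app B ≫ pushout.inr ((Q.δ k).app A) i :=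
  IsPushout.inr_desc _ _ _ _

theorem inl_comp_δ_comp_leibnizContraction (j : Fin 2) :
    pushout.inl ((Q.δ k).app A) i ≫
        (Q.δ j).app (pushout ((Q.δ k).app A) i) ≫ conn.leibnizContraction k i =
      (Q.δ j).app (Q.I.obj A) ≫ (conn.c k).app A ≫ pushout.inl ((Q.δ k).app A) i := by
  have inl_comp_δ := Q.comp_δ j (pushout.inl ((Q.δ k).app A) i)
  dsimp only [Functor.id_obj] at inl_comp_δ ⊢
  rw [reassoc_of% inl_comp_δ, map_inl_comp_leibnizContraction]

theorem inr_comp_δ_comp_leibnizContraction (j : Fin 2) :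
    pushout.inr ((Q.δ k).app A) i ≫
        (Q.δ j).app (pushout ((Q.δ k).app A) i) ≫ conn.leibnizContraction k i =
      pushout.inr ((Q.δ k).app A) i := by
  have inr_comp_δ := Q.comp_δ j (pushout.inr ((Q.δ k).app A) i)
  have δ_comp_ε := conn.contr j B
  dsimp only [Functor.id_obj] at inr_comp_δ δ_comp_ε ⊢
  rw [reassoc_of% inr_comp_δ, map_inr_comp_leibnizContraction, reassoc_of% δ_comp_ε]

theorem δ_comp_leibnizContraction :
    (Q.δ k).app (pushout ((Q.δ k).app A) i) ≫ conn.leibnizContraction k i =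
      Q.leibniz k i ≫ conn.ε.app B ≫ pushout.inr ((Q.δ k).app A) i := by
  apply pushout.hom_ext
  · have δ_comp_c := conn.conn_δ_cyl k A
    have inl_comp_leibniz := Q.inl_comp_leibniz k i
    dsimp only [Functor.id_obj, Functor.comp_obj] at δ_comp_c inl_comp_leibniz
    rw [inl_comp_δ_comp_leibnizContraction, reassoc_of% δ_comp_c, reassoc_of% inl_comp_leibniz,
      map_comp_ε_comp_inr]
  · have δ_comp_ε := conn.contr k B
    have inr_comp_leibniz := Q.inr_comp_leibniz k i
    dsimp only [Functor.id_obj] at δ_comp_ε inr_comp_leibniz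
    rw [inr_comp_δ_comp_leibnizContraction, reassoc_of% inr_comp_leibniz, reassoc_of% δ_comp_ε]

theorem δ'_comp_leibnizContraction :
    (Q.δ (1 - k)).app (pushout ((Q.δ k).app A) i) ≫ conn.leibnizContraction k i =
      𝟙 (pushout ((Q.δ k).app A) i) := by
  apply pushout.hom_ext
  · have δ'_comp_c := conn.conn_δ'_cyl k A
    dsimp only [Functor.id_obj, Functor.comp_obj] at δ'_comp_c
    rw [inl_comp_δ_comp_leibnizContraction, reassoc_of% δ'_comp_c, comp_id]
  · rw [inr_comp_δ_comp_leibnizContraction, comp_id]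

theorem leibnizContraction_comp_leibniz :
    conn.leibnizContraction k i ≫ Q.leibniz k i =
      Q.I.map (Q.leibniz k i) ≫ (conn.c k).app B := by
  apply (Q.isPushout_map_pushout k i).hom_ext
  · have map_inl_comp_contraction := conn.map_inl_comp_leibnizContraction k i
    have c_naturality := (conn.c k).naturality i
    dsimp only [Functor.comp_obj, Functor.comp_map] at map_inl_comp_contraction c_naturality
    rw [reassoc_of% map_inl_comp_contraction, Q.inl_comp_leibniz, ← c_naturality,
      ← Functor.map_comp_assoc, Q.inl_comp_leibniz]
  · have map_inr_comp_contraction := conn.map_inr_comp_leibnizContraction k i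
    rw [reassoc_of% map_inr_comp_contraction, Q.inr_comp_leibniz, ← conn.conn_cyl_δ,
      ← Functor.map_comp_assoc, Q.inr_comp_leibniz]

include conn in
theorem isStrongHEquiv_leibniz : IsStrongHEquiv Q k (Q.leibniz k i) := by
  have δ_comp_c : (Q.δ k).app (Q.I.obj B) ≫ (conn.c k).app B =
      (conn.ε.app B ≫ pushout.inr ((Q.δ k).app A) i) ≫ Q.leibniz k i := by
    rw [assoc, Q.inr_comp_leibniz]
    exact conn.conn_δ_cyl k B
  exact ⟨conn.ε.app B ≫ pushout.inr ((Q.δ k).app A) i, conn.leibnizContraction k i,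
    (conn.c k).app B, conn.δ_comp_leibnizContraction k i, conn.δ'_comp_leibnizContraction k i,
    δ_comp_c, conn.conn_δ'_cyl k B, conn.leibnizContraction_comp_leibniz k i⟩

end Connections

theorem generating_trivial_cofibrations_mem_cof_inter_S_general
    [HasPushouts E] (conn : Connections Q) (Cof : MorphismProperty E)
    (hCof : ∀ ⦃A B : E⦄ (i : A ⟶ B), Cof i → ∀ k : Fin 2, Cof (Q.leibniz k i))
    ⦃A B : E⦄ (i : A ⟶ B) (hi : Cof i) (k : Fin 2)
    [PreservesColimit (span ((Q.δ k).app A) i) Q.I] :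
    Cof (Q.leibniz k i) ∧
      (IsStrongHEquiv Q 0 (Q.leibniz k i) ∨ IsStrongHEquiv Q 1 (Q.leibniz k i)) :=
  ⟨hCof i hi k, (conn.isStrongHEquiv_leibniz k i).zero_or_one⟩

theorem generating_trivial_cofibrations_mem_cof_inter_S
    [HasFiniteLimits E] [HasFiniteColimits E]
    (conn : Connections Q) (Exp : E ⥤ E) (adj : Q.I ⊣ Exp)
    (I : MorphismProperty E)
    -- (S4): cofibrations are closed under Leibniz product with the endpoint inclusions
    (hS4 : ∀ ⦃A B : E⦄ (i : A ⟶ B), llp (rlp I) i → ∀ k : Fin 2,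
      llp (rlp I) (Q.leibniz k i))
    ⦃A B : E⦄ (i : A ⟶ B) (hi : I i) (k : Fin 2) :
    llp (rlp I) (Q.leibniz k i) ∧
      (IsStrongHEquiv Q 0 (Q.leibniz k i) ∨ IsStrongHEquiv Q 1 (Q.leibniz k i)) := by
  have := adj.isLeftAdjoint
  exact generating_trivial_cofibrations_mem_cof_inter_S_general Q conn (llp (rlp I)) hS4 i
    (le_llp_rlp I i hi) k

end GS
end

section
/- Let E be a finitely complete and cocomplete category equipped with a functorial cylinder I⊗(−) having a right adjoint exp(I,−). Let I be a class of maps, Cof = llp(rlp(I)), I_⊗ = { δᵏ ⊗̂ i : i ∈ I, k ∈ {0,1} }, Fib = rlp(I_⊗), and TrivCof = llp(Fib). Let S be the class of maps that are strong 0-oriented or strong 1-oriented homotopy equivalences. Then every map lying in Cof ∩ S lies in TrivCof. -/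
/-!
Statement 7 (Lemma `thm:main-sheretract`(ii)): every cofibration that is a strong
homotopy equivalence is a trivial cofibration, i.e. `Cof ∩ S ⊆ TrivCof`.
-/

open CategoryTheory Category Limits

universe v u

namespace GS

variable {E : Type u} [Category.{v} E]

variable (Q : Cylinder E)

/-!
A strong homotopy equivalence `f` is a retract of the Leibniz product `δᵏ ⊗̂ f`: the endpoint
`1 - k` provides the section, and the homotopies with the homotopy inverse provide the retraction.
So it suffices that `δᵏ ⊗̂ f` lifts against every fibration `p`. By the Leibniz adjunction,
`δᵏ ⊗̂ i` lifts against `p` iff `i` lifts against the pullback-hom of `δᵏ` and `p`; this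
pullback-hom is therefore in `rlp I`, and the cofibration `f` lifts against it.
-/

section ParametrizedAdjunction

variable {C₁ C₂ C₃ : Type*} [Category* C₁] [Category* C₂] [Category* C₃]

/-- The bifunctor `X ↦ (F.obj X).rightAdjoint`, contravariant in `X` by passing to the mates of
the transformations `F.map f`. -/
noncomputable def parametrizedRightAdjoint (F : C₁ ⥤ C₂ ⥤ C₃) [∀ X, (F.obj X).IsLeftAdjoint] :
    C₁ᵒᵖ ⥤ C₃ ⥤ C₂ where
  obj X := (F.obj X.unop).rightAdjoint
  map f := conjugateEquiv (.ofIsLeftAdjoint _) (.ofIsLeftAdjoint _) (F.map f.unop)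

/-- The adjunctions `F.obj X ⊣ (F.obj X).rightAdjoint` as a parametrized adjunction. -/
noncomputable def parametrizedRightAdjointAdjunction (F : C₁ ⥤ C₂ ⥤ C₃)
    [∀ X, (F.obj X).IsLeftAdjoint] : F ⊣₂ parametrizedRightAdjoint F where
  adj X := .ofIsLeftAdjoint (F.obj X)
  unit_whiskerRight_map f := by
    ext X
    exact (unit_conjugateEquiv _ _ (F.map f) X).symm

theorem hasLiftingProperty_pushoutObjObj_of_llp_rlp [HasPullbacks C₂]
    {F : C₁ ⥤ C₂ ⥤ C₃} {G : C₁ᵒᵖ ⥤ C₃ ⥤ C₂} (adj₂ : F ⊣₂ G) {X₁ Y₁ : C₁} {f₁ : X₁ ⟶ Y₁}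
    (sq : ∀ ⦃A B : C₂⦄ (i : A ⟶ B), F.PushoutObjObj f₁ i)
    {J : MorphismProperty C₂} {P R : C₃} {p : P ⟶ R}
    (hp : ∀ ⦃A B : C₂⦄ (i : A ⟶ B), J i → HasLiftingProperty (sq i).ι p)
    {X Y : C₂} {f : X ⟶ Y} (hf : llp (rlp J) f) :
    HasLiftingProperty (sq f).ι p := by
  let pullbackHom : G.PullbackObjObj f₁ p := .ofHasPullback ..
  have pullbackHom_mem : rlp J pullbackHom.π := fun _ _ i hi ↦
    (adj₂.hasLiftingProperty_iff (sq i) pullbackHom).mp (hp i hi)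
  exact (adj₂.hasLiftingProperty_iff (sq f) pullbackHom).mpr (hf _ pullbackHom_mem)

end ParametrizedAdjunction

namespace Cylinder

variable {Q}

theorem δ_comp_map (k : Fin 2) {A B : E} (i : A ⟶ B) :
    (Q.δ k).app A ≫ Q.I.map i = i ≫ (Q.δ k).app B :=
  ((Q.δ k).naturality i).symm

section Leibniz

variable [HasPushouts E] (k : Fin 2) {A B : E} (i : A ⟶ B)

theorem inl_leibniz_s7 : pushout.inl _ _ ≫ Q.leibniz k i = Q.I.map i :=
  pushout.inl_desc _ _ _

theorem inr_leibniz_s7 : pushout.inr _ _ ≫ Q.leibniz k i = (Q.δ k).app B :=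
  pushout.inr_desc _ _ _

variable (Q)

/-- The Leibniz product `δᵏ ⊗̂ i` as a Leibniz pushout in Mathlib's sense. The bifunctor is `δᵏ`
itself, seen as a functor from `{0 < 1}` to endofunctors and evaluated at the arrow `0 ⟶ 1`. -/
noncomputable def leibnizPushoutObjObj :
    (ComposableArrows.mk₁ (Q.δ k)).PushoutObjObj
      (homOfLE zero_le_one : (0 : Fin 2) ⟶ 1) i where
  pt := pushout ((Q.δ k).app A) i
  inl := pushout.inl _ _
  inr := pushout.inr _ _
  isPushout := IsPushout.of_hasPushout _ _
  ι := Q.leibniz k i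
  inl_ι := inl_leibniz_s7 k i
  inr_ι := inr_leibniz_s7 k i

end Leibniz

instance isLeftAdjoint_mk₁_δ_obj [Q.I.IsLeftAdjoint] (k j : Fin 2) :
    ((ComposableArrows.mk₁ (Q.δ k)).obj j).IsLeftAdjoint := by
  fin_cases j
  · exact inferInstanceAs (𝟭 E).IsLeftAdjoint
  · exact inferInstanceAs Q.I.IsLeftAdjoint

theorem hasLiftingProperty_leibniz_of_llp_rlp [HasPullbacks E] [HasPushouts E]
    [Q.I.IsLeftAdjoint] {I : MorphismProperty E} {P R : E} {p : P ⟶ R} (hp : fib Q I p)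
    {X Y : E} {f : X ⟶ Y} (hf : llp (rlp I) f) (k : Fin 2) :
    HasLiftingProperty (Q.leibniz k f) p :=
  hasLiftingProperty_pushoutObjObj_of_llp_rlp
    (parametrizedRightAdjointAdjunction (ComposableArrows.mk₁ (Q.δ k)))
    (fun _ _ i ↦ Q.leibnizPushoutObjObj k i) (fun _ _ i hi ↦ hp i hi k) hf

end Cylinder

variable {Q}

theorem IsStrongHEquiv.nonempty_retractArrow_leibniz [HasPushouts E] {k : Fin 2} {X Y : E}
    {f : X ⟶ Y} (h : IsStrongHEquiv Q k f) : Nonempty (RetractArrow f (Q.leibniz k f)) := by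
  obtain ⟨g, φ, ψ, hφk, hφ, hψk, hψ, hφψ⟩ := h
  let i : X ⟶ pushout ((Q.δ k).app X) f := (Q.δ (1 - k)).app X ≫ pushout.inl _ _
  let r : pushout ((Q.δ k).app X) f ⟶ X := pushout.desc φ g hφk
  have inl_r : pushout.inl _ _ ≫ r = φ := pushout.inl_desc _ _ _
  have inr_r : pushout.inr _ _ ≫ r = g := pushout.inr_desc _ _ _
  have i_w : i ≫ Q.leibniz k f = f ≫ (Q.δ (1 - k)).app Y := by
    rw [assoc, Cylinder.inl_leibniz_s7, Cylinder.δ_comp_map]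
  have r_w : r ≫ f = Q.leibniz k f ≫ ψ := by
    apply pushout.hom_ext
    · rw [reassoc_of% inl_r, reassoc_of% Cylinder.inl_leibniz_s7 (Q := Q) k f, hφψ]
    · rw [reassoc_of% inr_r, reassoc_of% Cylinder.inr_leibniz_s7 (Q := Q) k f, hψk]
  have i_r : i ≫ r = 𝟙 X := by
    rw [assoc, inl_r, hφ]
  exact ⟨{
    i := Arrow.homMk _ _ i_w
    r := Arrow.homMk _ _ r_w
    retract := Arrow.hom_ext _ _ i_r hψ }⟩

theorem cof_inter_S_mem_trivCof_general [HasPullbacks E] [HasPushouts E] [Q.I.IsLeftAdjoint]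
    {I : MorphismProperty E} {X Y : E} {f : X ⟶ Y} (hcof : llp (rlp I) f)
    {k : Fin 2} (hS : IsStrongHEquiv Q k f) : llp (fib Q I) f := by
  intro P R p hp
  obtain ⟨hretract⟩ := hS.nonempty_retractArrow_leibniz
  have := Cylinder.hasLiftingProperty_leibniz_of_llp_rlp hp hcof k
  exact hretract.leftLiftingProperty p

variable (Q)

theorem cof_inter_S_mem_trivCof
    [HasFiniteLimits E] [HasFiniteColimits E]
    (Exp : E ⥤ E) (adj : Q.I ⊣ Exp)
    (I : MorphismProperty E) {X Y : E} (f : X ⟶ Y)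
    (hcof : llp (rlp I) f)
    (hS : IsStrongHEquiv Q 0 f ∨ IsStrongHEquiv Q 1 f) :
    llp (fib Q I) f := by
  have := adj.isLeftAdjoint
  exact hS.elim (cof_inter_S_mem_trivCof_general hcof) (cof_inter_S_mem_trivCof_general hcof)

end GS
end

section
/- Let C be a small category and E = Psh(C). Let M be a class of monomorphisms in E such that: (a) M contains all identity maps; (b) M is stable under pullback; and (c) M is local with respect to representables, i.e., a monomorphism i : A → B lies in M whenever, for every x ∈ C and every map b : y(x) → B, the pullback of i along b lies in M. Then there exists a presheaf K and a monomorphism τ : 1 → K from the terminal presheaf such that a map i : A → B lies in M if and only if there exists a map χ : B → K making the square with sides i, the unique map A → 1, τ, and χ a pullback square. -/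
/-!
Statement 13 (Lemma `partial-map-classifier`, classifier part): a class `M` of
monomorphisms in a presheaf category that contains identities, is stable under
pullback and is local with respect to representables admits a classifier
`τ : 1 ⟶ K`: a map lies in `M` iff it is a pullback of `τ`.
-/

open CategoryTheory Category Limits

universe u

namespace GS

variable {C : Type u} [SmallCategory C]

universe w

/-!
In the presheaf `Ω` of sieves, the sieves on `x` whose inclusion into `y(x)` lies in `M` form a
subpresheaf `K`, by stability under pullback, and the maximal sieves lie in it. For a monomorphism
`i : A ⟶ B` with characteristic map `χ : B ⟶ Ω`, the sieve `χ(b)` at `b : y(x) ⟶ B` is the pullback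
of `i` along `b`. So `χ` factors through `K` iff all these pullbacks lie in `M`, which by stability
and locality means that `i` lies in `M`.
-/

section Classifier

variable {E : Type*} [Category* E] (c : Subobject.Classifier E)

lemma χ_eq_comp_χ_of_isPullback {P A X B : E} {p : P ⟶ A} {k : P ⟶ X} {i : A ⟶ B} {f : X ⟶ B}
    [Mono k] [Mono i] (h : IsPullback p k i f) : c.χ k = f ≫ c.χ i :=
  (c.uniq k (h.paste_horiz (c.isPullback i).flip).flip).symm

lemma property_iff_of_χ_eq (M : MorphismProperty E) [M.RespectsIso] {U V X : E} {m : U ⟶ X}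
    {n : V ⟶ X} [Mono m] [Mono n] (h : c.χ m = c.χ n) : M m ↔ M n := by
  have hm : IsPullback m (c.χ₀ U) (c.χ n) c.truth := h ▸ c.isPullback m
  rw [← hm.isoIsPullback_hom_fst _ _ (c.isPullback n), M.cancel_left_of_respectsIso]

lemma exists_isPullback_iff_exists_lift {T K A B : E} (hT : IsTerminal T) {τ : T ⟶ K}
    {ι : K ⟶ c.Ω} [Mono ι] (hτ : τ ≫ ι = c.χ₀ T ≫ c.truth) (i : A ⟶ B) [Mono i] :
    (∃ χ : B ⟶ K, IsPullback (hT.from A) i τ χ) ↔ ∃ χ : B ⟶ K, χ ≫ ι = c.χ i := by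
  have : IsIso (c.χ₀ T) := isIso_of_isTerminal hT c.isTerminalΩ₀ _
  have truth_factors : IsPullback (c.χ₀ T) τ c.truth ι := .of_horiz_isIso_mono ⟨hτ.symm⟩
  refine exists_congr fun χ => ⟨fun h => c.uniq i (h.paste_horiz truth_factors).flip, fun h => ?_⟩
  have outer : IsPullback (hT.from A ≫ c.χ₀ T) i c.truth (χ ≫ ι) := by
    rw [h, c.isTerminalΩ₀.hom_ext (hT.from A ≫ c.χ₀ T) (c.χ₀ A)]
    exact (c.isPullback i).flip
  refine outer.of_right ?_ truth_factors
  rw [← cancel_mono ι, assoc, assoc, hτ, ← assoc, outer.w]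

end Classifier

lemma exists_lift_iff_range_le {D : Type*} [Category* D] {F G : D ⥤ Type w} (g : F ⟶ G)
    (K : Subfunctor G) : (∃ f : F ⟶ K.toFunctor, f ≫ K.ι = g) ↔ Subfunctor.range g ≤ K := by
  refine ⟨?_, fun h => ⟨Subfunctor.lift g h, Subfunctor.lift_ι g h⟩⟩
  rintro ⟨f, rfl⟩
  exact (Subfunctor.range_comp_le f K.ι).trans_eq K.range_ι

lemma yonedaEquiv_χ_functorInclusion {X : C} (S : Sieve X) :
    yonedaEquiv (Presheaf.χ S.functorInclusion) = S := by
  refine Sieve.ext fun Y f => ?_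
  change (∃ g : {g : Y ⟶ X // S g}, f ≫ 𝟙 X = g.1) ↔ S f
  simp only [comp_id, Subtype.exists, exists_prop, exists_eq_right']

section ClassifyingPresheaf

variable (M : MorphismProperty (Cᵒᵖ ⥤ Type u))

lemma property_functorInclusion_iff_pullback_snd [M.RespectsIso] {A B : Cᵒᵖ ⥤ Type u}
    (i : A ⟶ B) [Mono i] {X : C} (b : yoneda.obj X ⟶ B) {S : Sieve X}
    (hS : yonedaEquiv (b ≫ Presheaf.χ i) = S) :
    M S.functorInclusion ↔ M (pullback.snd i b) := by
  refine property_iff_of_χ_eq (Presheaf.classifier C) M ?_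
  calc Presheaf.χ S.functorInclusion
    _ = b ≫ Presheaf.χ i := yonedaEquiv.injective ((yonedaEquiv_χ_functorInclusion S).trans hS.symm)
    _ = Presheaf.χ (pullback.snd i b) :=
      (χ_eq_comp_χ_of_isPullback (Presheaf.classifier C) (.of_hasPullback i b)).symm

variable [M.IsStableUnderBaseChange]

lemma property_functorInclusion_pullback {X Y : C} {S : Sieve X} (hS : M S.functorInclusion)
    (f : Y ⟶ X) : M (S.pullback f).functorInclusion := by
  refine (property_functorInclusion_iff_pullback_snd M S.functorInclusion (yoneda.map f) ?_).2
    (M.pullback_snd _ _ hS)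
  rw [← yonedaEquiv_naturality, yonedaEquiv_χ_functorInclusion]
  rfl

/-- The classifying presheaf `K` of `M`, as a subpresheaf of the presheaf of sieves: a sieve on `x`
is a subobject of `y(x)`, and it belongs to `K(x)` when its inclusion lies in `M`. -/
def classifyingSubfunctor : Subfunctor (Functor.sieves C) where
  obj U := {S : Sieve U.unop | M S.functorInclusion}
  map f _ hS := property_functorInclusion_pullback M hS f.unop

lemma range_truth_le_classifyingSubfunctor [M.ContainsIdentities] :
    Subfunctor.range (Presheaf.truth C) ≤ classifyingSubfunctor M := by
  rintro U _ ⟨_, rfl⟩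
  exact M.of_isIso (⊤ : Sieve U.unop).functorInclusion

lemma range_χ_le_classifyingSubfunctor_iff {A B : Cᵒᵖ ⥤ Type u} (i : A ⟶ B) [Mono i] :
    Subfunctor.range (Presheaf.χ i) ≤ classifyingSubfunctor M ↔
      ∀ (x : C) (b : yoneda.obj x ⟶ B), M (pullback.snd i b) := by
  refine ⟨fun h x b => ?_, ?_⟩
  · exact (property_functorInclusion_iff_pullback_snd M i b (yonedaEquiv_comp b _)).1 (h _ ⟨_, rfl⟩)
  · rintro h U _ ⟨s, rfl⟩
    obtain ⟨b, rfl⟩ := yonedaEquiv.surjective s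
    exact (property_functorInclusion_iff_pullback_snd M i b (yonedaEquiv_comp b _)).2 (h U.unop b)

variable [M.ContainsIdentities]

/-- The map `τ : 1 ⟶ K` selecting the maximal sieves. The domain is the chosen terminal object
`⊤_`, whereas `Presheaf.truth` starts at the constant presheaf. -/
noncomputable def classifyingTruth :
    ⊤_ (Cᵒᵖ ⥤ Type u) ⟶ (classifyingSubfunctor M).toFunctor :=
  Subfunctor.lift ((Presheaf.classifier C).χ₀ _ ≫ Presheaf.truth C)
    ((Subfunctor.range_comp_le _ _).trans (range_truth_le_classifyingSubfunctor M))

lemma exists_isPullback_classifyingTruth_iff {A B : Cᵒᵖ ⥤ Type u} (i : A ⟶ B) [Mono i] :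
    (∃ χ, IsPullback (terminal.from A) i (classifyingTruth M) χ) ↔
      ∀ (x : C) (b : yoneda.obj x ⟶ B), M (pullback.snd i b) := by
  have : Mono (Y := (Presheaf.classifier C).Ω) (classifyingSubfunctor M).ι :=
    inferInstanceAs (Mono (classifyingSubfunctor M).ι)
  calc (∃ χ, IsPullback (terminal.from A) i (classifyingTruth M) χ)
    _ ↔ ∃ χ, χ ≫ (classifyingSubfunctor M).ι = Presheaf.χ i :=
      exists_isPullback_iff_exists_lift (Presheaf.classifier C) terminalIsTerminal
        (ι := (classifyingSubfunctor M).ι) (Subfunctor.lift_ι _ _) i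
    _ ↔ Subfunctor.range (Presheaf.χ i) ≤ classifyingSubfunctor M := exists_lift_iff_range_le _ _
    _ ↔ _ := range_χ_le_classifyingSubfunctor_iff M i

end ClassifyingPresheaf

theorem exists_classifier (M : MorphismProperty (Cᵒᵖ ⥤ Type u))
    -- M is a class of monomorphisms
    (hmono : ∀ ⦃A B : Cᵒᵖ ⥤ Type u⦄ (i : A ⟶ B), M i → Mono i)
    -- (a) M contains all identities
    (hid : ∀ X : Cᵒᵖ ⥤ Type u, M (𝟙 X))
    -- (b) M is stable under pullback
    (hpb : ∀ ⦃A' A B' B : Cᵒᵖ ⥤ Type u⦄ (t : A' ⟶ A) (i' : A' ⟶ B') (i : A ⟶ B)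
      (b : B' ⟶ B), IsPullback t i' i b → M i → M i')
    -- (c) M is local with respect to representables
    (hloc : ∀ ⦃A B : Cᵒᵖ ⥤ Type u⦄ (i : A ⟶ B), Mono i →
      (∀ (x : C) (b : yoneda.obj x ⟶ B), M (pullback.snd i b)) → M i) :
    ∃ (K : Cᵒᵖ ⥤ Type u) (τ : ⊤_ (Cᵒᵖ ⥤ Type u) ⟶ K), Mono τ ∧
      ∀ ⦃A B : Cᵒᵖ ⥤ Type u⦄ (i : A ⟶ B),
        M i ↔ ∃ χ : B ⟶ K, IsPullback (terminal.from A) i τ χ := by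
  have : M.IsStableUnderBaseChange := ⟨hpb _ _ _ _⟩
  have : M.ContainsIdentities := ⟨hid⟩
  have τ_mono : Mono (classifyingTruth M) := terminalIsTerminal.mono_from _
  refine ⟨_, classifyingTruth M, τ_mono, fun A B i => ⟨fun hi => ?_, ?_⟩⟩
  · have i_mono : Mono i := hmono i hi
    exact (exists_isPullback_classifyingTruth_iff M i).2 fun _ b => M.pullback_snd i b hi
  · rintro ⟨χ, hχ⟩
    have i_mono : Mono i := hχ.mono_snd_of_mono
    exact hloc i i_mono ((exists_isPullback_classifyingTruth_iff M i).1 ⟨χ, hχ⟩)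

end GS
end

section
/- Let C be a small category and E = Psh(C). Let M be a class of monomorphisms in E that contains all identities, is stable under pullback, and is local with respect to representables (a mono i lies in M whenever all its pullbacks along maps from representables lie in M); let τ : 1 → K be a classifier for M, so that i ∈ M iff i is a pullback of τ. For Y ∈ E, let t = τ × id_Y : Y → K × Y, let π : K × Y → Y be the projection, and define the M-partial map classifier over Y as the endofunctor P_Y = π_! ∘ t_* of E/Y, where t_* is the pushforward (right adjoint to pullback along t) and π_! is composition with π; since t is a monomorphism, for X ∈ E/Y there is a canonical map η_X : X → P_Y(X) over Y fitting in a pullback square with t. Then a map f : X → Y has the right lifting property with respect to every map in M if and only if η_X : X → P_Y(X) admits a retraction in the slice category E/Y. -/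
/-!
Statement 15 (Theorem `thm:part-map-classifier`, non-algebraic form): a map
`f : X ⟶ Y` in a presheaf category has the right lifting property with respect to a
class `M` of monomorphisms (with classifier `τ : 1 ⟶ K`) if and only if the canonical
map `η : X ⟶ P_Y(X)` into the `M`-partial map classifier over `Y` admits a retraction
in the slice over `Y`.
-/

open CategoryTheory Category Limits

universe u

namespace GS

variable {C : Type u} [SmallCategory C]

/-!
Two facts carry the proof. First, `t` is itself a pullback of `τ`, hence so is `η`; thus `η ∈ M`
and a retraction of `η` over `Y` is a lift in one particular square. Second, since `t` is a
monomorphism, `t^*` inverts every map `A ⟶ B` over `K × Y` that is a pullback of `t`, so by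
adjunction a map `A ⟶ t_* Z` over `K × Y` extends to `B`. Consequently the partial map given by a
lifting problem of `i ∈ M` against `f` extends to `B ⟶ P_Y(X)`, and a retraction of `η` turns this
extension into a lift.
-/

section Pushforward

variable {E : Type*} [Category* E] {S T : E} {t : S ⟶ T} [Mono t] [HasPullbacksAlong t]

lemma isIso_overPullback_map_of_isPullback {U V : Over T} (φ : U ⟶ V) {a : U.left ⟶ S}
    (h : IsPullback φ.left a V.hom t) : IsIso ((Over.pullback t).map φ) := by
  have hU : U.hom = a ≫ t := by rw [← h.w, Over.w]
  have hiso : IsIso (pullback.fst U.hom t) := by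
    rw [hU]
    infer_instance
  have hsnd : pullback.fst U.hom t ≫ a = pullback.snd U.hom t := by
    rw [← cancel_mono t, assoc, ← hU, pullback.condition]
  have hφ : ((Over.pullback t).map φ).left = pullback.fst U.hom t ≫ h.isoPullback.hom := by
    apply pullback.hom_ext
    · exact (pullback.lift_fst _ _ _).trans (by simp)
    · exact (pullback.lift_snd _ _ _).trans (by simp [hsnd])
  have : IsIso ((Over.forget S).map ((Over.pullback t).map φ)) := by
    rw [Over.forget_map, hφ]
    exact .comp_isIso' hiso h.isoPullback.isIso_hom
  exact isIso_of_reflects_iso _ (Over.forget S)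

lemma bijective_comp_pushforward {R : Over S ⥤ Over T} (adj : Over.pullback t ⊣ R)
    {U V : Over T} (φ : U ⟶ V) {a : U.left ⟶ S} (h : IsPullback φ.left a V.hom t) (Z : Over S) :
    Function.Bijective fun g : V ⟶ R.obj Z ↦ φ ≫ g := by
  have := isIso_overPullback_map_of_isPullback φ h
  rw [← adj.map_comp_bijective_iff]
  exact (asIso ((Over.pullback t).map φ)).symm.homFromEquiv.bijective

lemma exists_extension_pushforward {R : Over S ⥤ Over T} (adj : Over.pullback t ⊣ R)
    {A B : E} {i : A ⟶ B} {a : A ⟶ S} {b : B ⟶ T} (h : IsPullback i a b t) {Z : Over S}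
    (g : A ⟶ (R.obj Z).left) (hg : g ≫ (R.obj Z).hom = i ≫ b) :
    ∃ g' : B ⟶ (R.obj Z).left, i ≫ g' = g ∧ g' ≫ (R.obj Z).hom = b := by
  let φ : Over.mk (i ≫ b) ⟶ Over.mk b := Over.homMk i
  obtain ⟨g', hg'⟩ := (bijective_comp_pushforward adj φ h Z).surjective (Over.homMk g hg)
  exact ⟨g'.left, congrArg CommaMorphism.left hg', Over.w g'⟩

end Pushforward

section Classifier

variable {E : Type*} [Category* E] [HasTerminal E] {K : E}

/-- `IsClassifier M τ` says that `τ : 1 ⟶ K` classifies the class of maps `M`: the maps in `M` are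
exactly the pullbacks of `τ`. The classifying map is not required to be unique. -/
def IsClassifier (M : MorphismProperty E) (τ : ⊤_ E ⟶ K) : Prop :=
  ∀ ⦃A B : E⦄ (i : A ⟶ B), M i ↔ ∃ χ : B ⟶ K, IsPullback (terminal.from A) i τ χ

/-- The map `τ × id_Y : Y ⟶ K × Y`, with `1 × Y` identified with `Y`. Pushforward along it followed
by composition with the projection to `Y` is the partial map classifier over `Y`. -/
noncomputable abbrev pointSection (τ : ⊤_ E ⟶ K) (Y : E) [HasBinaryProduct K Y] : Y ⟶ K ⨯ Y :=
  prod.lift (terminal.from Y ≫ τ) (𝟙 Y)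

variable {M : MorphismProperty E} {τ : ⊤_ E ⟶ K} {X Y : E} [HasBinaryProduct K Y]

lemma IsClassifier.isStableUnderBaseChange (hM : IsClassifier M τ) :
    M.IsStableUnderBaseChange where
  of_isPullback sq hg := by
    obtain ⟨χ, hχ⟩ := (hM _).1 hg
    exact (hM _).2 ⟨_, by simpa using sq.paste_horiz hχ⟩

lemma isPullback_pointSection :
    IsPullback (terminal.from Y) (pointSection τ Y) τ (prod.fst : K ⨯ Y ⟶ K) := by
  have : IsIso (τ ≫ terminal.from K) := isIso_of_isTerminal terminalIsTerminal terminalIsTerminal _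
  have outer : IsPullback (pointSection τ Y ≫ prod.snd) (terminal.from Y) (terminal.from Y)
      (τ ≫ terminal.from K) := by
    rw [prod.lift_snd]
    exact .of_horiz_isIso ⟨Subsingleton.elim _ _⟩
  exact (outer.of_right (prod.lift_fst _ _) (IsPullback.of_hasBinaryProduct' K Y).flip).flip

lemma IsClassifier.pointSection_mem (hM : IsClassifier M τ) : M (pointSection τ Y) :=
  (hM _).2 ⟨_, isPullback_pointSection⟩

lemma isPullback_pointSection_lift {A B : E} {i : A ⟶ B} {χ : B ⟶ K}
    (h : IsPullback (terminal.from A) i τ χ) (v : B ⟶ Y) :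
    IsPullback i (i ≫ v) (prod.lift χ v) (pointSection τ Y) := by
  have outer : IsPullback ((i ≫ v) ≫ terminal.from Y) i τ (prod.lift χ v ≫ prod.fst) := by
    simpa only [prod.lift_fst, terminal.comp_from] using h
  refine (outer.of_right ?_ isPullback_pointSection).flip
  ext
  · simp [prod.lift_fst, ← h.w]
  · simp [prod.lift_snd]

variable [HasPullbacksAlong (pointSection τ Y)]

lemma IsClassifier.exists_extension_of_partialMap (hM : IsClassifier M τ) {f : X ⟶ Y}
    {R : Over Y ⥤ Over (K ⨯ Y)} (adj : Over.pullback (pointSection τ Y) ⊣ R)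
    {η : X ⟶ (R.obj (Over.mk f)).left} (hη : η ≫ (R.obj (Over.mk f)).hom = f ≫ pointSection τ Y)
    {A B : E} {i : A ⟶ B} (hi : M i) {u : A ⟶ X} {v : B ⟶ Y} (sq : u ≫ f = i ≫ v) :
    ∃ g : B ⟶ (R.obj (Over.mk f)).left,
      i ≫ g = u ≫ η ∧ g ≫ (R.obj (Over.mk f)).hom ≫ prod.snd = v := by
  obtain ⟨χ, hχ⟩ := (hM i).1 hi
  have hpartial := isPullback_pointSection_lift hχ v
  have hover : (u ≫ η) ≫ (R.obj (Over.mk f)).hom = i ≫ prod.lift χ v := by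
    rw [assoc, hη, reassoc_of% sq, hpartial.w, assoc]
  obtain ⟨g, hig, hg⟩ := exists_extension_pushforward adj hpartial (u ≫ η) hover
  exact ⟨g, hig, by rw [reassoc_of% hg, prod.lift_snd]⟩

theorem rlp_iff_retraction_of_partial_map_classifier_general (hM : IsClassifier M τ) (f : X ⟶ Y)
    (R : Over Y ⥤ Over (K ⨯ Y)) (adj : Over.pullback (pointSection τ Y) ⊣ R)
    (η : X ⟶ (R.obj (Over.mk f)).left)
    (hη : IsPullback η f (R.obj (Over.mk f)).hom (pointSection τ Y)) :
    M.rlp f ↔ ∃ r : (R.obj (Over.mk f)).left ⟶ X,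
      η ≫ r = 𝟙 X ∧ r ≫ f = (R.obj (Over.mk f)).hom ≫ prod.snd := by
  constructor
  · intro hf
    have := hM.isStableUnderBaseChange
    have := hf η (M.of_isPullback hη.flip hM.pointSection_mem)
    have sq : CommSq (𝟙 X) η f ((R.obj (Over.mk f)).hom ≫ prod.snd) :=
      ⟨by rw [reassoc_of% hη.w, prod.lift_snd, id_comp, comp_id]⟩
    exact ⟨sq.lift, sq.fac_left, sq.fac_right⟩
  · rintro ⟨r, hηr, hrf⟩ A B i hi
    refine ⟨fun {u v} sq ↦ ?_⟩
    obtain ⟨g, hig, hgv⟩ := hM.exists_extension_of_partialMap adj hη.w hi sq.w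
    exact ⟨⟨⟨g ≫ r, by rw [reassoc_of% hig, hηr, comp_id], by rw [assoc, hrf, hgv]⟩⟩⟩

end Classifier

theorem rlp_iff_retraction_of_partial_map_classifier
    (M : MorphismProperty (Cᵒᵖ ⥤ Type u))
    -- M is a class of monomorphisms
    (hmono : ∀ ⦃A B : Cᵒᵖ ⥤ Type u⦄ (i : A ⟶ B), M i → Mono i)
    -- M contains all identities
    (hid : ∀ X : Cᵒᵖ ⥤ Type u, M (𝟙 X))
    -- M is stable under pullback
    (hpb : ∀ ⦃A' A B' B : Cᵒᵖ ⥤ Type u⦄ (t : A' ⟶ A) (i' : A' ⟶ B') (i : A ⟶ B)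
      (b : B' ⟶ B), IsPullback t i' i b → M i → M i')
    -- M is local with respect to representables
    (hloc : ∀ ⦃A B : Cᵒᵖ ⥤ Type u⦄ (i : A ⟶ B), Mono i →
      (∀ (x : C) (b : yoneda.obj x ⟶ B), M (pullback.snd i b)) → M i)
    -- `τ : 1 ⟶ K` classifies `M`
    (K : Cᵒᵖ ⥤ Type u) (τ : ⊤_ (Cᵒᵖ ⥤ Type u) ⟶ K)
    (hclass : ∀ ⦃A B : Cᵒᵖ ⥤ Type u⦄ (i : A ⟶ B),
      M i ↔ ∃ χ : B ⟶ K, IsPullback (terminal.from A) i τ χ)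
    -- the map `f : X ⟶ Y` under consideration
    {X Y : Cᵒᵖ ⥤ Type u} (f : X ⟶ Y)
    -- `t = τ × id_Y : Y ⟶ K × Y` and the pushforward `t_*` along `t`
    (Pstar : Over Y ⥤ Over (K ⨯ Y))
    (adj : Over.pullback (prod.lift (terminal.from Y ≫ τ) (𝟙 Y)) ⊣ Pstar)
    -- the canonical unit `η : X ⟶ P_Y(X)`, fitting in a pullback square with `t`
    (η : X ⟶ (Pstar.obj (Over.mk f)).left)
    (hη : IsPullback η f (Pstar.obj (Over.mk f)).hom
      (prod.lift (terminal.from Y ≫ τ) (𝟙 Y))) :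
    -- `f` has the right lifting property with respect to `M` iff
    -- `η` admits a retraction in the slice over `Y`
    (∀ ⦃A B : Cᵒᵖ ⥤ Type u⦄ (i : A ⟶ B), M i → HasLiftingProperty i f) ↔
      ∃ r : (Pstar.obj (Over.mk f)).left ⟶ X,
        η ≫ r = 𝟙 X ∧ r ≫ f = (Pstar.obj (Over.mk f)).hom ≫ prod.snd :=
  rlp_iff_retraction_of_partial_map_classifier_general hclass f Pstar adj η hη

end GS
end
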